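/- Let b ≥ 2, t ≥ 1 and n ≥ 1 be integers. Then Σ_{n ≤ a_t < a_{t−1} < ⋯ < a_1} ∏_{j=1}^{t} b^{−a_j} = b^{−t(n−1)} ∏_{i=1}^{t} 1/(b^{i}−1), where the sum is over all strictly increasing t-tuples of integers (a_t, a_{t−1}, …, a_1) with a_t ≥ n. -/

import Mathlib

namespace QMC

/-!
Remove the smallest entry `a_{t+1} = n + k` of a strictly decreasing tuple and lower the other
entries by `k + 1`. The result is an arbitrary strictly decreasing `t`-tuple with entries at least
`n`, independent of `k`, and with `q = b⁻¹` the weight `∏ q ^ a_j` splits off the factor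
`q ^ (n + t) * (q ^ (t + 1)) ^ k`. Summing over `k`, the passage from `t` to `t + 1` multiplies the
series by `q ^ (n + t) / (1 - q ^ (t + 1))`.
-/

theorem strictAnti_snoc {α : Type*} [Preorder α] {t : ℕ} {a : Fin t → α} {x : α} :
    StrictAnti (Fin.snoc a x : Fin (t + 1) → α) ↔ StrictAnti a ∧ ∀ j, x < a j := by
  simp [StrictAnti, Fin.forall_fin_succ', forall_and, Fin.castSucc_lt_last,
    (Fin.castSucc_lt_last _).not_gt]

/-- The strictly decreasing `t`-tuples of natural numbers with all entries at least `n`. Bounding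
every entry, rather than the last one, makes sense for `t = 0` too. -/
def decreasingTuples (t n : ℕ) : Set (Fin t → ℕ) :=
  {a | StrictAnti a ∧ ∀ j, n ≤ a j}

theorem mem_decreasingTuples_iff_last {t n : ℕ} (ht : 1 ≤ t) {a : Fin t → ℕ} :
    a ∈ decreasingTuples t n ↔ StrictAnti a ∧ n ≤ a ⟨t - 1, by omega⟩ :=
  and_congr_right fun ha =>
    ⟨fun h => h _, fun h j => h.trans (ha.antitone (Nat.le_sub_one_of_lt j.isLt))⟩

theorem snoc_mem_decreasingTuples {t n x : ℕ} {a : Fin t → ℕ} :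
    (Fin.snoc a x : Fin (t + 1) → ℕ) ∈ decreasingTuples (t + 1) n ↔
      a ∈ decreasingTuples t (x + 1) ∧ n ≤ x := by
  simp only [decreasingTuples, Set.mem_ofPred_eq, strictAnti_snoc, Fin.forall_fin_succ',
    Fin.snoc_castSucc, Fin.snoc_last, Nat.succ_le_iff]
  grind

theorem add_mem_decreasingTuples {t n c : ℕ} {a : Fin t → ℕ} :
    (fun j => a j + c) ∈ decreasingTuples t (n + c) ↔ a ∈ decreasingTuples t n := by
  simp [decreasingTuples, StrictAnti]

theorem sub_mem_decreasingTuples {t n c : ℕ} {a : Fin t → ℕ}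
    (ha : a ∈ decreasingTuples t (n + c)) : (fun j => a j - c) ∈ decreasingTuples t n := by
  rw [← add_mem_decreasingTuples (c := c)]
  convert ha using 2 with j
  exact Nat.sub_add_cancel (le_of_add_le_right (ha.2 j))

theorem init_mem_decreasingTuples {t n : ℕ} {a : Fin (t + 1) → ℕ}
    (ha : a ∈ decreasingTuples (t + 1) n) :
    (fun j => a j.castSucc) ∈ decreasingTuples t (a (Fin.last t) + 1) :=
  ⟨ha.1.comp_strictMono Fin.strictMono_castSucc, fun j => ha.1 j.castSucc_lt_last⟩

/-- The decomposition of a strictly decreasing `(t + 1)`-tuple with smallest entry `n + k` into `k`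
and the tuple of its other entries, lowered by `k + 1`. The shift makes the range of the second
component independent of `k`. -/
def snocShiftEquiv (t n : ℕ) : ℕ × decreasingTuples t n ≃ decreasingTuples (t + 1) n where
  toFun p := ⟨Fin.snoc (α := fun _ => ℕ) (fun j => p.2.1 j + (p.1 + 1)) (n + p.1),
    snoc_mem_decreasingTuples.2
      ⟨add_mem_decreasingTuples (c := p.1 + 1).2 p.2.2, Nat.le_add_right n p.1⟩⟩
  invFun a := ⟨a.1 (Fin.last t) - n, fun j => a.1 j.castSucc - (a.1 (Fin.last t) - n + 1),
    sub_mem_decreasingTuples <| by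
      rw [← add_assoc, Nat.add_sub_cancel' (a.2.2 _)]
      exact init_mem_decreasingTuples a.2⟩
  left_inv p := by ext <;> simp
  right_inv a := by
    ext j
    have le_last : n ≤ a.1 (Fin.last t) := a.2.2 _
    induction j using Fin.lastCases with
    | last => simp [le_last]
    | cast j =>
      have last_lt : a.1 (Fin.last t) < a.1 j.castSucc := a.2.1 j.castSucc_lt_last
      simp only [Fin.snoc_castSucc]
      omega

theorem prod_pow_snocShiftEquiv {M : Type*} [CommMonoid M] (q : M) {t n : ℕ}
    (p : ℕ × decreasingTuples t n) :
    ∏ j, q ^ (snocShiftEquiv t n p).1 j =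
      q ^ (n + t) * (q ^ (t + 1)) ^ p.1 * ∏ j, q ^ p.2.1 j := by
  have exponent_eq : (p.1 + 1) * t + (n + p.1) = n + t + (t + 1) * p.1 := by ring
  simp only [snocShiftEquiv, Equiv.coe_fn_mk, Fin.prod_univ_castSucc, Fin.snoc_castSucc,
    Fin.snoc_last, pow_add q (p.2.1 _), Finset.prod_mul_distrib, Finset.prod_const,
    Finset.card_univ, Fintype.card_fin]
  rw [← pow_mul, ← pow_mul, mul_assoc, ← pow_add, ← pow_add, exponent_eq, mul_comm]

instance (n : ℕ) : Unique (decreasingTuples 0 n) where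
  default := ⟨Fin.elim0, fun i => i.elim0, fun i => i.elim0⟩
  uniq _ := Subtype.ext (Subsingleton.elim _ _)

section Series

variable {K : Type*} [NormedField K] {q : K}

theorem norm_pow_succ_lt_one (hq : ‖q‖ < 1) (t : ℕ) : ‖q ^ (t + 1)‖ < 1 :=
  norm_pow q (t + 1) ▸ pow_lt_one₀ (norm_nonneg q) hq t.succ_ne_zero

theorem summable_norm_mul_geometric (c : K) (hq : ‖q‖ < 1) :
    Summable fun k : ℕ => ‖c * q ^ k‖ := by
  simpa only [norm_mul] using (summable_norm_geometric_of_norm_lt_one hq).mul_left ‖c‖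

theorem summable_norm_prod_pow_decreasingTuples (hq : ‖q‖ < 1) (t n : ℕ) :
    Summable fun a : decreasingTuples t n => ‖∏ j, q ^ a.1 j‖ := by
  induction t with
  | zero => exact (hasSum_unique _).summable
  | succ t ih =>
    rw [← (snocShiftEquiv t n).summable_iff]
    simpa only [Function.comp_def, prod_pow_snocShiftEquiv] using
      (summable_norm_mul_geometric (q ^ (n + t)) (norm_pow_succ_lt_one hq t)).mul_norm ih

theorem hasSum_prod_pow_decreasingTuples (hq : ‖q‖ < 1) (t n : ℕ) :
    HasSum (fun a : decreasingTuples t n => ∏ j, q ^ a.1 j)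
      (∏ i ∈ Finset.range t, q ^ (n + i) / (1 - q ^ (i + 1))) := by
  induction t with
  | zero => simp
  | succ t ih =>
    have ratio_lt_one := norm_pow_succ_lt_one hq t
    have geometric := (hasSum_geometric_of_norm_lt_one ratio_lt_one).mul_left (q ^ (n + t))
    have summable_product := summable_mul_of_summable_norm'
      (summable_norm_mul_geometric (q ^ (n + t)) ratio_lt_one) geometric.summable
      (summable_norm_prod_pow_decreasingTuples hq t n) ih.summable
    rw [← (snocShiftEquiv t n).hasSum_iff, Finset.prod_range_succ, mul_comm, div_eq_mul_inv]
    simpa only [Function.comp_def, prod_pow_snocShiftEquiv] using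
      geometric.mul ih summable_product

end Series

theorem prod_range_inv_pow_div {K : Type*} [Field K] {b : K} (hb : b ≠ 0) (t m : ℕ) :
    ∏ i ∈ Finset.range t, b⁻¹ ^ (m + 1 + i) / (1 - b⁻¹ ^ (i + 1)) =
      (b ^ (t * m))⁻¹ * ∏ i ∈ Finset.Icc 1 t, (b ^ i - 1)⁻¹ := by
  have factor_eq (i : ℕ) :
      b⁻¹ ^ (m + 1 + i) / (1 - b⁻¹ ^ (i + 1)) = (b ^ m)⁻¹ * (b ^ (i + 1) - 1)⁻¹ := by
    have pow_sub_one_eq : b ^ (i + 1) - 1 = b ^ (i + 1) * (1 - b⁻¹ ^ (i + 1)) := by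
      rw [mul_sub, ← mul_pow, mul_inv_cancel₀ hb, one_pow, mul_one]
    rw [pow_sub_one_eq, mul_inv, add_assoc, add_comm 1 i, pow_add, inv_pow, inv_pow, div_eq_mul_inv,
      mul_assoc]
  have reindex : ∏ i ∈ Finset.range t, (b ^ (i + 1) - 1)⁻¹ =
      ∏ i ∈ Finset.Icc 1 t, (b ^ i - 1)⁻¹ := by
    rw [Finset.range_eq_Ico, Finset.prod_Ico_add' fun i => (b ^ i - 1)⁻¹]
    rfl
  simp only [factor_eq, Finset.prod_mul_distrib, Finset.prod_const, Finset.card_range, reindex]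
  rw [inv_pow, ← pow_mul, mul_comm m]

theorem sum_decreasing_tuples_general {K : Type*} [NormedField K] {b : K} (hb : 1 < ‖b‖)
    {t n : ℕ} (ht : 1 ≤ t) (hn : 1 ≤ n) :
    HasSum (fun a : {a : Fin t → ℕ // StrictAnti a ∧ n ≤ a ⟨t - 1, by omega⟩} =>
        ∏ j, (b ^ a.1 j)⁻¹)
      ((b ^ (t * (n - 1)))⁻¹ * ∏ i ∈ Finset.Icc 1 t, (b ^ i - 1)⁻¹) := by
  obtain ⟨m, rfl⟩ := Nat.exists_eq_add_of_le' hn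
  have b_ne_zero : b ≠ 0 := norm_pos_iff.1 (one_pos.trans hb)
  have norm_inv_lt_one : ‖b⁻¹‖ < 1 := norm_inv b ▸ inv_lt_one_of_one_lt₀ hb
  have hsum := hasSum_prod_pow_decreasingTuples norm_inv_lt_one t (m + 1)
  rw [prod_range_inv_pow_div b_ne_zero] at hsum
  simp only [inv_pow] at hsum
  exact (Equiv.subtypeEquivRight fun _ => (mem_decreasingTuples_iff_last ht).symm).hasSum_iff
    (f := fun a : decreasingTuples t (m + 1) => ∏ j, (b ^ a.1 j)⁻¹) |>.2 hsum

/-- For integers `b ≥ 2`, `t ≥ 1`, `n ≥ 1`, the sum of `∏_{j=1}^t b^{-a_j}` over all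
strictly decreasing tuples `a_1 > a_2 > ⋯ > a_t ≥ n` equals
`b^{-t(n-1)} ∏_{i=1}^t 1/(bⁱ - 1)`. -/
theorem sum_decreasing_tuples (b t n : ℕ) (hb : 2 ≤ b) (ht : 1 ≤ t) (hn : 1 ≤ n) :
    ∑' a : {a : Fin t → ℕ // StrictAnti a ∧ n ≤ a ⟨t - 1, by omega⟩},
        ∏ j, ((b : ℝ) ^ a.1 j)⁻¹ =
      ((b : ℝ) ^ (t * (n - 1)))⁻¹ * ∏ i ∈ Finset.Icc 1 t, ((b : ℝ) ^ i - 1)⁻¹ :=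
  (sum_decreasing_tuples_general (by simpa using Nat.lt_of_succ_le hb) ht hn).tsum_eq

end QMC
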